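/- arXiv:2308.09535 — 2 statements merged into one kernel-verified Lean document; each statement's English description precedes it below -/
import Mathlib

section
/- (Lemma 1(iii)) Under the balanced-design assumption, there exists a constant C depending only on δ such that Σ_{i,j} A_ij⁴ ≤ C K_Z; consequently (1/K_Z²) Σ_{i,j} A_ij⁴ → 0 as K_Z → ∞. -/
/-!
Write `B = M D_θ M`, so that `P = A + B`. The matrix `A` vanishes on the diagonal and satisfies
`M A M = A`, hence `tr (B A) = tr (D_θ A) = 0`: the decomposition `P = A + B` is orthogonal for the
Frobenius inner product, and `∑ A_ij² ≤ ∑ P_ij² = tr P = K_Z`. Moreover `P` and `B` are positive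
semidefinite (the latter because `θ ≥ 0`) with the same diagonal, whose entries are at most `1`, so
their entries lie in `[-1, 1]` and `A_ij² ≤ 4`. Together, `∑ A_ij⁴ ≤ 4 K_Z`.
-/

open Matrix Finset

/-- The residual-maker (annihilator) projection `M_W = I - W (W'W)⁻¹ W'`. -/
noncomputable def annihilator {N KW : ℕ} (W : Matrix (Fin N) (Fin KW) ℝ) :
    Matrix (Fin N) (Fin N) ℝ :=
  1 - W * (Wᵀ * W)⁻¹ * Wᵀ

/-- The balanced-design assumption for the matrices `W`, `P⊥`, the vector `θ` and
the constant `δ`: `W` has full column rank, `P⊥` is a symmetric idempotent matrix of rank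
`K_Z` with `M_W P⊥ = P⊥ M_W = P⊥`, `θ` solves `∑_j (M_W)_ij² θ_j = (P⊥)_ii` with `θ_i ≥ 0`,
`min_i (M_W)_ii > 1/2`, and `(P⊥)_ii/(M_W)_ii² ≤ δ` for all `i`. -/
structure BalancedDesign {N KW : ℕ} (KZ : ℕ) (W : Matrix (Fin N) (Fin KW) ℝ)
    (Pperp : Matrix (Fin N) (Fin N) ℝ) (θ : Fin N → ℝ) (δ : ℝ) : Prop where
  hWrank : W.rank = KW
  hPsymm : Pperp.IsSymm
  hPidem : Pperp * Pperp = Pperp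
  hPrank : Pperp.rank = KZ
  hMP : annihilator W * Pperp = Pperp
  hPM : Pperp * annihilator W = Pperp
  hθ : ∀ i, ∑ j, (annihilator W i j) ^ 2 * θ j = Pperp i i
  hθnn : ∀ i, 0 ≤ θ i
  hMdiag : ∀ i, 1 / 2 < annihilator W i i
  hδ : ∀ i, Pperp i i / (annihilator W i i) ^ 2 ≤ δ

/-- The diagonal-free matrix `A = P⊥ − M_W D_θ M_W`. -/
noncomputable def Amat {N KW : ℕ} (W : Matrix (Fin N) (Fin KW) ℝ)
    (Pperp : Matrix (Fin N) (Fin N) ℝ) (θ : Fin N → ℝ) : Matrix (Fin N) (Fin N) ℝ :=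
  Pperp - annihilator W * Matrix.diagonal θ * annihilator W

section

variable {m n R 𝕜 K : Type*} [Fintype n]

lemma inv_mul_mul_inv_self [DecidableEq n] [CommRing R] (G : Matrix n n R) :
    G⁻¹ * G * G⁻¹ = G⁻¹ := by
  by_cases hG : IsUnit G.det
  · rw [nonsing_inv_mul _ hG, one_mul]
  · simp [nonsing_inv_apply_not_isUnit _ hG]

lemma sum_sum_sq_eq_trace_mul_self [Semiring R] {A : Matrix n n R} (hA : A.IsSymm) :
    ∑ i, ∑ j, A i j ^ 2 = (A * A).trace := by
  simp only [trace, diag_apply, mul_apply, hA.apply, sq]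

lemma trace_eq_rank_of_isIdempotentElem [Field K] {P : Matrix n n K} (hP : IsIdempotentElem P) :
    P.trace = P.rank := by
  classical
  have hproj : IsIdempotentElem (toLin' P) := hP.map (toLinAlgEquiv' (R := K) (n := n))
  rw [← trace_toLin'_eq, (LinearMap.IsIdempotentElem.isProj_range _ hproj).trace, rank,
    toLin'_apply']

lemma posSemidef_of_isStarProjection [Ring R] [PartialOrder R] [StarRing R] [StarOrderedRing R]
    {P : Matrix n n R} (hP : IsStarProjection P) : P.PosSemidef := by
  have hPP : P * Pᴴ = P := by
    rw [← star_eq_conjTranspose, hP.isSelfAdjoint.star_eq, hP.isIdempotentElem.eq]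
  exact hPP ▸ posSemidef_self_mul_conjTranspose P

lemma apply_self_le_one_of_isStarProjection [Ring R] [PartialOrder R] [StarRing R]
    [StarOrderedRing R] {P : Matrix n n R} (hP : IsStarProjection P) (i : n) : P i i ≤ 1 := by
  classical
  simpa using (posSemidef_of_isStarProjection hP.one_sub).diag_nonneg (i := i)

open scoped ComplexOrder in
lemma apply_mul_apply_le_of_posSemidef [RCLike 𝕜] {A : Matrix m m 𝕜} (hA : A.PosSemidef)
    (i j : m) : A i j * A j i ≤ A i i * A j j := by
  have hdet := (hA.submatrix ![i, j]).det_nonneg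
  rw [det_fin_two] at hdet
  simpa using hdet

lemma sq_apply_le_one_of_posSemidef {A : Matrix m m ℝ} (hA : A.PosSemidef)
    (hdiag : ∀ i, A i i ≤ 1) (i j : m) : A i j ^ 2 ≤ 1 :=
  calc A i j ^ 2 = A i j * A j i := by
        rw [(isHermitian_iff_isSymm.mp hA.isHermitian).apply i j, sq]
    _ ≤ A i i * A j j := apply_mul_apply_le_of_posSemidef hA i j
    _ ≤ 1 := mul_le_one₀ (hdiag i) hA.diag_nonneg (hdiag j)

lemma trace_mul_diagonal_mul_mul [DecidableEq n] [CommSemiring R] {M X : Matrix n n R}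
    (hX : M * X * M = X) (θ : n → R) :
    (M * diagonal θ * M * X).trace = ∑ i, θ i * X i i :=
  calc (M * diagonal θ * M * X).trace = (diagonal θ * (M * X * M)).trace := by
        simp only [mul_assoc, trace_mul_comm M]
    _ = ∑ i, θ i * X i i := by simp [hX, trace]

end

lemma tendsto_one_div_sq_mul_of_le_mul {α : Type*} {l : Filter α} {k : α → ℕ} {f : α → ℝ} {C : ℝ}
    (hf : ∀ a, 0 ≤ f a) (hfk : ∀ a, f a ≤ C * k a) (hk : Filter.Tendsto k l Filter.atTop) :
    Filter.Tendsto (fun a => 1 / (k a : ℝ) ^ 2 * f a) l (nhds 0) := by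
  have hlim : Filter.Tendsto (fun a => C / (k a : ℝ)) l (nhds 0) :=
    (tendsto_natCast_atTop_atTop.comp hk).const_div_atTop C
  refine squeeze_zero (fun a => mul_nonneg (by positivity) (hf a)) (fun a => ?_) hlim
  calc 1 / (k a : ℝ) ^ 2 * f a ≤ 1 / (k a : ℝ) ^ 2 * (C * k a) := by gcongr; exact hfk a
    _ = C / k a := by
      rcases eq_or_ne (k a : ℝ) 0 with hka | hka
      · simp [hka]
      · field_simp

/-- The hypotheses on a pair of orthogonal projections `M`, `P` with `range P ⊆ range M` and on a
nonnegative vector `θ` under which `P - M D_θ M` has zero diagonal. -/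
structure IsDiagonalCorrection {n : Type*} [Fintype n] (M P : Matrix n n ℝ) (θ : n → ℝ) :
    Prop where
  isStarProjection_left : IsStarProjection M
  isStarProjection_right : IsStarProjection P
  mul_eq_right : M * P = P
  nonneg : 0 ≤ θ
  sum_sq_mul_eq : ∀ i, ∑ j, M i j ^ 2 * θ j = P i i

namespace IsDiagonalCorrection

variable {n : Type*} [Fintype n] [DecidableEq n] {M P : Matrix n n ℝ} {θ : n → ℝ}

lemma posSemidef_mul_diagonal_mul (h : IsDiagonalCorrection M P θ) :
    (M * diagonal θ * M).PosSemidef := by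
  simpa only [h.isStarProjection_left.isSelfAdjoint.isHermitian.eq] using
    (PosSemidef.diagonal h.nonneg).mul_mul_conjTranspose_same M

lemma mul_diagonal_mul_apply_self (h : IsDiagonalCorrection M P θ) (i : n) :
    (M * diagonal θ * M) i i = P i i := by
  have hM : M.IsSymm := isHermitian_iff_isSymm.mp h.isStarProjection_left.isSelfAdjoint.isHermitian
  rw [mul_apply, ← h.sum_sq_mul_eq i]
  refine sum_congr rfl fun j _ => ?_
  rw [mul_diagonal, hM.apply i j, mul_right_comm, sq]

lemma isSymm_sub (h : IsDiagonalCorrection M P θ) : (P - M * diagonal θ * M).IsSymm :=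
  isHermitian_iff_isSymm.mp <|
    h.isStarProjection_right.isSelfAdjoint.isHermitian.sub h.posSemidef_mul_diagonal_mul.isHermitian

lemma mul_sub_mul (h : IsDiagonalCorrection M P θ) :
    M * (P - M * diagonal θ * M) * M = P - M * diagonal θ * M := by
  have hMM : M * M = M := h.isStarProjection_left.isIdempotentElem
  have hcomm : Commute M P :=
    (h.isStarProjection_left.isSelfAdjoint.commute_iff h.isStarProjection_right.isSelfAdjoint).mpr
      (h.mul_eq_right.symm ▸ h.isStarProjection_right.isSelfAdjoint)
  have hPM : P * M = P := hcomm.eq.symm.trans h.mul_eq_right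
  have hBM : M * (M * diagonal θ * M) * M = M * diagonal θ * M := by
    rw [mul_assoc M, mul_assoc _ M M, hMM, ← mul_assoc, ← mul_assoc, hMM]
  rw [mul_sub, sub_mul, h.mul_eq_right, hPM, hBM]

lemma trace_mul_diagonal_mul_mul_sub (h : IsDiagonalCorrection M P θ) :
    (M * diagonal θ * M * (P - M * diagonal θ * M)).trace = 0 := by
  rw [trace_mul_diagonal_mul_mul h.mul_sub_mul]
  simp [h.mul_diagonal_mul_apply_self]

lemma sum_sum_sq_sub_le_rank (h : IsDiagonalCorrection M P θ) :
    ∑ i, ∑ j, (P - M * diagonal θ * M) i j ^ 2 ≤ P.rank := by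
  have hPP : P * P = P := h.isStarProjection_right.isIdempotentElem
  have hortho := h.trace_mul_diagonal_mul_mul_sub
  have hB : 0 ≤ ((M * diagonal θ * M) * (M * diagonal θ * M)).trace := by
    rw [← sum_sum_sq_eq_trace_mul_self
      (isHermitian_iff_isSymm.mp h.posSemidef_mul_diagonal_mul.isHermitian)]
    positivity
  rw [sum_sum_sq_eq_trace_mul_self h.isSymm_sub, ← trace_eq_rank_of_isIdempotentElem hPP]
  set B := M * diagonal θ * M
  have hpythagoras : P.trace = ((P - B) * (P - B)).trace + (B * B).trace :=
    calc P.trace = (P * P).trace := by rw [hPP]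
      _ = ((P - B) * (P - B) + (P - B) * B + B * (P - B) + B * B).trace := by
        congr 1; noncomm_ring
      _ = ((P - B) * (P - B)).trace + (B * B).trace := by
        simp only [trace_add, trace_mul_comm (P - B) B, hortho, add_zero]
  linarith

lemma sq_sub_apply_le_four (h : IsDiagonalCorrection M P θ) (i j : n) :
    (P - M * diagonal θ * M) i j ^ 2 ≤ 4 := by
  have hdiag := apply_self_le_one_of_isStarProjection h.isStarProjection_right
  have hP : P i j ^ 2 ≤ 1 :=
    sq_apply_le_one_of_posSemidef (posSemidef_of_isStarProjection h.isStarProjection_right)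
      hdiag i j
  have hB : (M * diagonal θ * M) i j ^ 2 ≤ 1 :=
    sq_apply_le_one_of_posSemidef h.posSemidef_mul_diagonal_mul
      (fun k => (h.mul_diagonal_mul_apply_self k).trans_le (hdiag k)) i j
  rw [Matrix.sub_apply]
  linarith [sq_nonneg (P i j + (M * diagonal θ * M) i j)]

lemma sum_sum_pow_four_sub_le (h : IsDiagonalCorrection M P θ) :
    ∑ i, ∑ j, (P - M * diagonal θ * M) i j ^ 4 ≤ 4 * P.rank :=
  calc ∑ i, ∑ j, (P - M * diagonal θ * M) i j ^ 4
      ≤ ∑ i, ∑ j, 4 * (P - M * diagonal θ * M) i j ^ 2 := by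
        refine sum_le_sum fun i _ => sum_le_sum fun j _ => ?_
        rw [pow_add _ 2 2]
        exact mul_le_mul_of_nonneg_right (h.sq_sub_apply_le_four i j) (sq_nonneg _)
    _ = 4 * ∑ i, ∑ j, (P - M * diagonal θ * M) i j ^ 2 := by simp only [mul_sum]
    _ ≤ 4 * P.rank := by gcongr; exact h.sum_sum_sq_sub_le_rank

end IsDiagonalCorrection

lemma isStarProjection_annihilator {N KW : ℕ} (W : Matrix (Fin N) (Fin KW) ℝ) :
    IsStarProjection (annihilator W) := by
  refine IsStarProjection.one_sub ⟨?_, ?_⟩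
  · calc W * (Wᵀ * W)⁻¹ * Wᵀ * (W * (Wᵀ * W)⁻¹ * Wᵀ)
        = W * ((Wᵀ * W)⁻¹ * (Wᵀ * W) * (Wᵀ * W)⁻¹) * Wᵀ := by simp only [Matrix.mul_assoc]
      _ = W * (Wᵀ * W)⁻¹ * Wᵀ := by rw [inv_mul_mul_inv_self]
  · refine (isHermitian_iff_isSymm.mpr ?_).isSelfAdjoint
    simp [IsSymm, transpose_nonsing_inv, Matrix.mul_assoc]

lemma BalancedDesign.isDiagonalCorrection {N KW KZ : ℕ} {W : Matrix (Fin N) (Fin KW) ℝ}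
    {P : Matrix (Fin N) (Fin N) ℝ} {θ : Fin N → ℝ} {δ : ℝ} (h : BalancedDesign KZ W P θ δ) :
    IsDiagonalCorrection (annihilator W) P θ where
  isStarProjection_left := isStarProjection_annihilator W
  isStarProjection_right := ⟨h.hPidem, (isHermitian_iff_isSymm.mpr h.hPsymm).isSelfAdjoint⟩
  mul_eq_right := h.hMP
  nonneg := h.hθnn
  sum_sq_mul_eq := h.hθ

theorem lemma1_part_iii_general.{u, v} :
    (∀ {n : Type u} [Fintype n] [DecidableEq n] {M P : Matrix n n ℝ} {θ : n → ℝ},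
      IsDiagonalCorrection M P θ →
      ∑ i, ∑ j, (P - M * diagonal θ * M) i j ^ 4 ≤ 4 * (P.rank : ℝ)) ∧
    (∀ {α : Type v} {l : Filter α} {n : α → Type u} [∀ a, Fintype (n a)]
      [∀ a, DecidableEq (n a)] {M P : ∀ a, Matrix (n a) (n a) ℝ} {θ : ∀ a, n a → ℝ},
      (∀ a, IsDiagonalCorrection (M a) (P a) (θ a)) →
      Filter.Tendsto (fun a => (P a).rank) l Filter.atTop →
      Filter.Tendsto
        (fun a => 1 / ((P a).rank : ℝ) ^ 2 *
          ∑ i, ∑ j, (P a - M a * diagonal (θ a) * M a) i j ^ 4)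
        l (nhds 0)) :=
  ⟨fun h => h.sum_sum_pow_four_sub_le, fun h hk =>
    tendsto_one_div_sq_mul_of_le_mul
      (fun _ => by positivity)
      (fun a => (h a).sum_sum_pow_four_sub_le) hk⟩

/-- Lemma 1(iii): Under the balanced-design assumption, there exists a constant
`C` depending only on `δ` such that `∑_{i,j} A_ij⁴ ≤ C K_Z`; consequently
`(1/K_Z²) ∑_{i,j} A_ij⁴ → 0` as `K_Z → ∞`. -/
theorem lemma1_part_iii (δ : ℝ) (hδ : δ < 1) :
    ∃ C : ℝ, 0 < C ∧
      (∀ (N KW KZ : ℕ) (W : Matrix (Fin N) (Fin KW) ℝ)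
        (Pperp : Matrix (Fin N) (Fin N) ℝ) (θ : Fin N → ℝ),
        BalancedDesign KZ W Pperp θ δ →
        ∑ i, ∑ j, (Amat W Pperp θ i j) ^ 4 ≤ C * (KZ : ℝ)) ∧
      (∀ (N KW KZ : ℕ → ℕ)
        (W : ∀ n, Matrix (Fin (N n)) (Fin (KW n)) ℝ)
        (Pperp : ∀ n, Matrix (Fin (N n)) (Fin (N n)) ℝ)
        (θ : ∀ n, Fin (N n) → ℝ),
        (∀ n, BalancedDesign (KZ n) (W n) (Pperp n) (θ n) δ) →
        Filter.Tendsto KZ Filter.atTop Filter.atTop →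
        Filter.Tendsto
          (fun n => (1 / (KZ n : ℝ) ^ 2) *
            ∑ i, ∑ j, (Amat (W n) (Pperp n) (θ n) i j) ^ 4)
          Filter.atTop (nhds 0)) := by
  refine ⟨4, four_pos, fun N KW KZ W P θ h => ?_, fun N KW KZ W P θ h hKZ => ?_⟩
  · exact h.hPrank ▸ lemma1_part_iii_general.{0, 0}.1 h.isDiagonalCorrection
  · obtain rfl : (fun n => (P n).rank) = KZ := funext fun n => (h n).hPrank
    exact lemma1_part_iii_general.2 (fun n => (h n).isDiagonalCorrection) hKZ
end

section
/- The matrix A = P⊥ − M_W D_θ M_W, where θ solves Σ_j (M_W)_ij² θ_j = (P⊥)_ii for all i, satisfies the exact identity Σ_{i,j} A_ij² = K_Z − Σ_k (P⊥)_kk θ_k, where K_Z = tr(P⊥) is the rank of P⊥. If in addition 0 ≤ θ_k ≤ δ for all k for some δ < 1, then (1 − δ) K_Z ≤ Σ_{i,j} A_ij² ≤ K_Z. -/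
open Matrix Finset

/-!
In the Frobenius inner product `⟨X, Y⟩ = tr (X * Yᵀ)`, the equations for `θ` say that
`B = M * diagonal θ * M` satisfies `⟨P, B⟩ = ∑ k, P k k * θ k = ⟨B, B⟩`. Hence `P - B` is orthogonal
to `B` and Pythagoras gives `‖P - B‖² = ‖P‖² - ‖B‖² = tr P - ∑ k, P k k * θ k`. The upper bound is
`0 ≤ ‖B‖²`; the lower bound follows from `0 ≤ P k k`, as `P` is an orthogonal projection.
-/

section Frobenius

variable {m n R : Type*} [Fintype m] [Fintype n]

theorem sum_sq_eq_trace_mul_transpose [Semiring R] (A : Matrix m n R) :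
    ∑ i, ∑ j, A i j ^ 2 = trace (A * Aᵀ) := by
  simp only [sq, ← sum_hadamard_eq, hadamard_apply]

theorem sum_sq_sub_of_trace_mul_transpose_eq [CommRing R] {A B : Matrix m n R}
    (hAB : trace (A * Bᵀ) = trace (B * Bᵀ)) :
    ∑ i, ∑ j, (A - B) i j ^ 2 = ∑ i, ∑ j, A i j ^ 2 - ∑ i, ∑ j, B i j ^ 2 := by
  have hBA : trace (B * Aᵀ) = trace (B * Bᵀ) := by
    rw [← hAB, ← trace_transpose, transpose_mul, transpose_transpose]
  simp only [sum_sq_eq_trace_mul_transpose, transpose_sub, Matrix.sub_mul, Matrix.mul_sub,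
    trace_sub, hAB, hBA, sub_self, sub_zero]

end Frobenius

section Projection

variable {n R : Type*} [Fintype n]

theorem sum_row_sq_eq_diag [Semiring R] {P : Matrix n n R} (hP : P.IsSymm)
    (hPP : IsIdempotentElem P) (i : n) : ∑ j, P i j ^ 2 = P i i := by
  calc ∑ j, P i j ^ 2 = ∑ j, P i j * P j i := by simp only [sq, hP.apply]
    _ = P i i := by rw [← mul_apply, hPP.eq]

theorem diag_nonneg_of_isSymm_of_isIdempotentElem [Ring R] [LinearOrder R] [IsOrderedRing R]
    {P : Matrix n n R} (hP : P.IsSymm) (hPP : IsIdempotentElem P) (i : n) : 0 ≤ P i i := by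
  rw [← sum_row_sq_eq_diag hP hPP]
  exact sum_nonneg fun j _ => sq_nonneg (P i j)

theorem trace_mul_compression [CommSemiring R] {M P : Matrix n n R} (hMP : M * P = P)
    (hPM : P * M = P) (D : Matrix n n R) : trace (P * (M * D * M)) = trace (P * D) := by
  rw [← Matrix.mul_assoc, trace_mul_comm, ← Matrix.mul_assoc, ← Matrix.mul_assoc, hMP, hPM]

variable [DecidableEq n]

theorem isSymm_compression_diagonal [CommSemiring R] {M : Matrix n n R} (hM : M.IsSymm)
    (θ : n → R) : (M * diagonal θ * M).IsSymm := by
  simp only [IsSymm, transpose_mul, hM.eq, diagonal_transpose, Matrix.mul_assoc]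

theorem trace_mul_diagonal_eq_sum [NonUnitalNonAssocSemiring R] (P : Matrix n n R) (θ : n → R) :
    trace (P * diagonal θ) = ∑ k, P k k * θ k := by
  simp only [trace, diag_apply, mul_diagonal]

theorem sum_sq_compression_diagonal [CommSemiring R] {M : Matrix n n R} (hM : M.IsSymm)
    (hMM : IsIdempotentElem M) (θ : n → R) :
    ∑ i, ∑ j, (M * diagonal θ * M) i j ^ 2 = ∑ i, (∑ j, M i j ^ 2 * θ j) * θ i := by
  have hMB : M * (M * diagonal θ * M) = M * diagonal θ * M := by
    rw [← Matrix.mul_assoc, ← Matrix.mul_assoc, hMM.eq]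
  have hBM : M * diagonal θ * M * M = M * diagonal θ * M := by
    rw [Matrix.mul_assoc, hMM.eq]
  have hdiag (i : n) : (M * diagonal θ * M) i i = ∑ j, M i j ^ 2 * θ j := by
    rw [mul_apply]
    refine sum_congr rfl fun j _ => ?_
    rw [mul_diagonal, hM.apply]
    ring
  rw [sum_sq_eq_trace_mul_transpose, (isSymm_compression_diagonal hM θ).eq,
    trace_mul_compression hMB hBM, trace_mul_diagonal_eq_sum]
  simp only [hdiag]

theorem sum_sq_sub_compression_diagonal [CommRing R] {M P : Matrix n n R} (hM : M.IsSymm)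
    (hMM : IsIdempotentElem M) (hP : P.IsSymm) (hPP : IsIdempotentElem P) (hMP : M * P = P)
    {θ : n → R} (hθ : ∀ i, ∑ j, M i j ^ 2 * θ j = P i i) :
    ∑ i, ∑ j, (P - M * diagonal θ * M) i j ^ 2 = trace P - ∑ k, P k k * θ k := by
  have hPM : P * M = P := by
    rw [← hP.eq, ← hM.eq, ← transpose_mul, hMP]
  have hB : ∑ i, ∑ j, (M * diagonal θ * M) i j ^ 2 = ∑ k, P k k * θ k := by
    simp only [sum_sq_compression_diagonal hM hMM, hθ]
  have horth : trace (P * (M * diagonal θ * M)ᵀ)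
      = trace (M * diagonal θ * M * (M * diagonal θ * M)ᵀ) := by
    rw [← sum_sq_eq_trace_mul_transpose, hB, (isSymm_compression_diagonal hM θ).eq,
      trace_mul_compression hMP hPM, trace_mul_diagonal_eq_sum]
  have hPsq : ∑ i, ∑ j, P i j ^ 2 = trace P := by
    simp only [sum_row_sq_eq_diag hP hPP, trace, diag_apply]
  rw [sum_sq_sub_of_trace_mul_transpose_eq horth, hPsq, hB]

theorem sum_sq_A_identity_and_bounds_general [CommRing R] [LinearOrder R] [IsOrderedRing R]
    {M P : Matrix n n R} (hM : M.IsSymm) (hMM : IsIdempotentElem M) (hP : P.IsSymm)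
    (hPP : IsIdempotentElem P) (hMP : M * P = P) {θ : n → R}
    (hθ : ∀ i, ∑ j, M i j ^ 2 * θ j = P i i) :
    ∑ i, ∑ j, (P - M * diagonal θ * M) i j ^ 2 = trace P - ∑ k, P k k * θ k ∧
    ∑ i, ∑ j, (P - M * diagonal θ * M) i j ^ 2 ≤ trace P ∧
    ∀ δ, (∀ k, θ k ≤ δ) →
      (1 - δ) * trace P ≤ ∑ i, ∑ j, (P - M * diagonal θ * M) i j ^ 2 := by
  have hA := sum_sq_sub_compression_diagonal hM hMM hP hPP hMP hθ
  refine ⟨hA, ?_, fun δ hδ => ?_⟩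
  · have hnonneg : 0 ≤ ∑ k, P k k * θ k := by
      simp only [← hθ, ← sum_sq_compression_diagonal hM hMM]
      exact sum_nonneg fun i _ => sum_nonneg fun j _ => sq_nonneg _
    rw [hA]
    exact sub_le_self _ hnonneg
  · have hle : ∑ k, P k k * θ k ≤ trace P * δ := by
      rw [trace, sum_mul]
      exact sum_le_sum fun k _ => mul_le_mul_of_nonneg_left (hδ k)
        (diag_nonneg_of_isSymm_of_isIdempotentElem hP hPP k)
    rw [hA, sub_mul, one_mul, mul_comm δ]
    exact sub_le_sub_left hle _

end Projection

section Annihilator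

theorem nonsing_inv_mul_mul_nonsing_inv {n R : Type*} [Fintype n] [DecidableEq n] [CommRing R]
    (G : Matrix n n R) : G⁻¹ * G * G⁻¹ = G⁻¹ := by
  by_cases hG : IsUnit G.det
  · rw [nonsing_inv_mul G hG, Matrix.one_mul]
  · -- The inverse of a singular matrix is `0`.
    rw [nonsing_inv_apply_not_isUnit G hG, Matrix.mul_zero]

variable {N KW : ℕ} (W : Matrix (Fin N) (Fin KW) ℝ)

theorem isSymm_annihilator : (annihilator W).IsSymm := by
  simp only [IsSymm, annihilator, transpose_sub, transpose_one, transpose_mul,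
    transpose_nonsing_inv, transpose_transpose, Matrix.mul_assoc]

theorem isIdempotentElem_annihilator : IsIdempotentElem (annihilator W) := by
  have hhat : IsIdempotentElem (W * (Wᵀ * W)⁻¹ * Wᵀ) := by
    calc W * (Wᵀ * W)⁻¹ * Wᵀ * (W * (Wᵀ * W)⁻¹ * Wᵀ)
        = W * ((Wᵀ * W)⁻¹ * (Wᵀ * W) * (Wᵀ * W)⁻¹) * Wᵀ := by simp only [Matrix.mul_assoc]
      _ = W * (Wᵀ * W)⁻¹ * Wᵀ := by rw [nonsing_inv_mul_mul_nonsing_inv]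
  exact hhat.one_sub

end Annihilator

/-- The matrix `A = P⊥ − M_W D_θ M_W`, where `θ` solves
`∑_j (M_W)_ij² θ_j = (P⊥)_ii` for all `i`, satisfies the exact identity
`∑_{i,j} A_ij² = K_Z − ∑_k (P⊥)_kk θ_k`, where `K_Z = tr(P⊥)` is the rank of `P⊥`.
If in addition `0 ≤ θ_k ≤ δ` for all `k` for some `δ < 1`, then
`(1 − δ) K_Z ≤ ∑_{i,j} A_ij² ≤ K_Z`. -/
theorem sum_sq_A_identity_and_bounds
    (N KW KZ : ℕ) (W : Matrix (Fin N) (Fin KW) ℝ) (hWrank : W.rank = KW)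
    (Pperp : Matrix (Fin N) (Fin N) ℝ)
    (hPsymm : Pperp.IsSymm) (hPidem : Pperp * Pperp = Pperp)
    (hPrank : Pperp.rank = KZ) (htr : Pperp.trace = (KZ : ℝ))
    (hMP : annihilator W * Pperp = Pperp) (hPM : Pperp * annihilator W = Pperp)
    (θ : Fin N → ℝ)
    (hθ : ∀ i, ∑ j, (annihilator W i j) ^ 2 * θ j = Pperp i i) :
    (∑ i, ∑ j, ((Pperp - annihilator W * Matrix.diagonal θ * annihilator W) i j) ^ 2
      = (KZ : ℝ) - ∑ k, Pperp k k * θ k) ∧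
    (∀ δ : ℝ, δ < 1 → (∀ k, 0 ≤ θ k) → (∀ k, θ k ≤ δ) →
      (1 - δ) * (KZ : ℝ)
        ≤ ∑ i, ∑ j, ((Pperp - annihilator W * Matrix.diagonal θ * annihilator W) i j) ^ 2 ∧
      ∑ i, ∑ j, ((Pperp - annihilator W * Matrix.diagonal θ * annihilator W) i j) ^ 2
        ≤ (KZ : ℝ)) := by
  obtain ⟨hA, hupper, hlower⟩ := sum_sq_A_identity_and_bounds_general (isSymm_annihilator W)
    (isIdempotentElem_annihilator W) hPsymm hPidem hMP hθ
  exact htr ▸ ⟨hA, fun δ _ _ hδ => ⟨hlower δ hδ, hupper⟩⟩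
end
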